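/- arXiv:2011.09973 — 2 statements merged into one kernel-verified Lean document; each statement's English description precedes it below -/
import Mathlib

section
/- Let S be a symmetric d×d matrix, G a symmetric positive semidefinite d×d matrix, and η > 0 with ‖η·G‖_op ≤ 1/2, where ‖·‖_op is the spectral norm. Then the Bregman divergence of r* satisfies V^{r*}_S(S + η·G) := r*(S + η·G) − r*(S) − ⟨∇r*(S), η·G⟩ ≤ ⟨η·G, ∇r*(S)⟩; equivalently, r*(S + η·G) − r*(S) ≤ 2·⟨η·G, ∇r*(S)⟩. -/
open Finset

/-- The `k`-Fantope: symmetric matrices `Y` with `0 ⪯ Y ⪯ I` and `Tr(Y) = k`. -/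
def Fantope (d k : ℕ) : Set (Matrix (Fin d) (Fin d) ℝ) :=
  {Y | Y.PosSemidef ∧ ((1 : Matrix (Fin d) (Fin d) ℝ) - Y).PosSemidef ∧
    Y.trace = (k : ℝ)}

/-- The matrix entropy regularizer `r(Y) = ∑_j (λ_j(Y)·log λ_j(Y) − λ_j(Y))`. -/
noncomputable def matEntropy {d : ℕ} (Y : Matrix (Fin d) (Fin d) ℝ) : ℝ := by
  classical
  exact if h : Y.IsHermitian then
    ∑ j, (h.eigenvalues j * Real.log (h.eigenvalues j) - h.eigenvalues j)
  else 0

/-- Trace inner product `⟨A, B⟩ = Tr(A·B)`. -/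
def minner {d : ℕ} (A B : Matrix (Fin d) (Fin d) ℝ) : ℝ := (A * B).trace

/-- `r*(S) = max_{Y ∈ 𝒴} (⟨S, Y⟩ − r(Y))`, the conjugate of the entropy over the Fantope. -/
noncomputable def rStar (d k : ℕ) (S : Matrix (Fin d) (Fin d) ℝ) : ℝ :=
  sSup ((fun Y => minner S Y - matEntropy Y) '' Fantope d k)

/-- The spectral (ℓ₂ operator) norm of a matrix. -/
noncomputable def opNorm {d : ℕ} (A : Matrix (Fin d) (Fin d) ℝ) : ℝ :=
  ‖Matrix.toEuclideanCLM (𝕜 := ℝ) A‖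

/-!
Write `r(Y) = Tr (Y log Y - Y)` and let `D(Z ‖ X)` be the relative entropy, its Bregman divergence.
Let `Y` maximize `⟨S, ·⟩ - r` over a convex set of positive semidefinite matrices, let `Z` be any
other point of that set and put `X = (1 - t) Y + t Z`. The identity
`(1 - t) D(Y ‖ X) + t D(Z ‖ X) = (1 - t) r(Y) + t r(Z) - r(X)`, the bound `0 ≤ D(Y ‖ X)` and the
optimality of `Y` against `X` give `⟨S, Z⟩ - r(Z) + D(Z ‖ X) ≤ ⟨S, Y⟩ - r(Y)`. Comparing with `X`
rather than `Y` avoids `log Y`, which is meaningless when `Y` is singular.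

For `A` positive semidefinite with `‖A‖ ≤ 1/2`, the parallelogram law for `P ↦ Tr (A P²)` and
`Tr (√Z - √X)² ≤ D(Z ‖ X)` give
`⟨A, Z⟩ ≤ 2⟨A, X⟩ + 2 Tr (A (√Z - √X)²) ≤ 2⟨A, X⟩ + D(Z ‖ X)`. Adding the two estimates yields
`⟨S + A, Z⟩ - r(Z) ≤ ⟨S, Y⟩ - r(Y) + 2⟨A, X⟩`, and `X → Y` as `t → 0`.
-/

section

open Matrix RCLike
open scoped ComplexOrder MatrixOrder

variable {n 𝕜 : Type*} [RCLike 𝕜] [Fintype n]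

lemma re_trace_mul_nonneg {A B : Matrix n n 𝕜} (hA : A.PosSemidef) (hB : B.PosSemidef) :
    0 ≤ re (A * B).trace := by
  classical
  obtain ⟨C, rfl⟩ := CStarAlgebra.nonneg_iff_eq_star_mul_self.mp hB.nonneg
  rw [← mul_assoc, trace_mul_comm, ← mul_assoc]
  exact (nonneg_iff.mp (hA.mul_mul_conjTranspose_same C).trace_nonneg).1

lemma re_trace_mul_self_mul_conjTranspose_le {A : Matrix n n 𝕜} (hA : A.PosSemidef)
    (P Q : Matrix n n 𝕜) :
    re (A * (P * Pᴴ)).trace ≤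
      2 * (re (A * (Q * Qᴴ)).trace + re (A * ((P - Q) * (P - Q)ᴴ)).trace) := by
  have parallelogram : P * Pᴴ + (Q + Q - P) * (Q + Q - P)ᴴ =
      (Q * Qᴴ + (P - Q) * (P - Q)ᴴ) + (Q * Qᴴ + (P - Q) * (P - Q)ᴴ) := by
    simp only [conjTranspose_sub, conjTranspose_add]
    noncomm_ring
  have trace_parallelogram := congr(re (A * $parallelogram).trace)
  simp only [Matrix.mul_add, trace_add, map_add] at trace_parallelogram
  linarith [re_trace_mul_nonneg hA (posSemidef_self_mul_conjTranspose (Q + Q - P))]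

lemma mulVec_eq_zero_of_add {A B : Matrix n n 𝕜} (hA : A.PosSemidef) (hB : B.PosSemidef)
    {v : n → 𝕜} (h : (A + B) *ᵥ v = 0) : A *ᵥ v = 0 := by
  have hsum : star v ⬝ᵥ A *ᵥ v + star v ⬝ᵥ B *ᵥ v = 0 := by
    rw [← dotProduct_add, ← add_mulVec, h, dotProduct_zero]
  exact (hA.dotProduct_mulVec_zero_iff v).mp
    ((add_eq_zero_iff_of_nonneg (hA.dotProduct_mulVec_nonneg v)
      (hB.dotProduct_mulVec_nonneg v)).mp hsum).1

variable [DecidableEq n]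

lemma eigenvalues_le_opNorm {A : Matrix n n 𝕜} (hA : A.IsHermitian) (i : n) :
    hA.eigenvalues i ≤ ‖toEuclideanCLM (n := n) (𝕜 := 𝕜) A‖ := by
  have eigen : toEuclideanCLM (n := n) (𝕜 := 𝕜) A (hA.eigenvectorBasis i) =
      hA.eigenvalues i • hA.eigenvectorBasis i :=
    WithLp.ofLp_injective 2 (hA.mulVec_eigenvectorBasis i)
  have h := (toEuclideanCLM (n := n) (𝕜 := 𝕜) A).le_opNorm (hA.eigenvectorBasis i)
  rw [eigen, norm_smul, hA.eigenvectorBasis.norm_eq_one, mul_one, mul_one] at h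
  exact (le_abs_self _).trans h

lemma le_opNorm_smul_one {A : Matrix n n 𝕜} (hA : A.IsHermitian) :
    A ≤ ‖toEuclideanCLM (n := n) (𝕜 := 𝕜) A‖ • (1 : Matrix n n 𝕜) := by
  rw [← Algebra.algebraMap_eq_smul_one]
  refine le_algebraMap_of_spectrum_le (fun x hx => ?_) hA.isSelfAdjoint
  rw [hA.spectrum_real_eq_range_eigenvalues] at hx
  obtain ⟨i, rfl⟩ := hx
  exact eigenvalues_le_opNorm hA i

lemma re_trace_mul_le_opNorm {A B : Matrix n n 𝕜} (hA : A.IsHermitian) (hB : B.PosSemidef) :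
    re (A * B).trace ≤ ‖toEuclideanCLM (n := n) (𝕜 := 𝕜) A‖ * re B.trace := by
  have h := re_trace_mul_nonneg (le_iff.mp (le_opNorm_smul_one hA)) hB
  simpa [Matrix.sub_mul, RCLike.smul_re] using h

/-- The squared overlap `|⟨u_i, v_j⟩|²` of the `i`-th eigenvector of `A` with the `j`-th eigenvector
of `B`. It turns traces of products of functions of `A` and `B` into sums over pairs of
eigenvalues. -/
noncomputable def eigenOverlap {A B : Matrix n n 𝕜} (hA : A.IsHermitian) (hB : B.IsHermitian)
    (i j : n) : ℝ :=
  ‖inner 𝕜 (hA.eigenvectorBasis i) (hB.eigenvectorBasis j)‖ ^ 2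

lemma trace_cfc_mul_cfc {A B : Matrix n n 𝕜} (hA : A.IsHermitian) (hB : B.IsHermitian)
    (f g : ℝ → ℝ) :
    (cfc f A * cfc g B).trace =
      ((∑ i, ∑ j, eigenOverlap hA hB i j *
        (f (hA.eigenvalues i) * g (hB.eigenvalues j)) : ℝ) : 𝕜) := by
  set U : Matrix n n 𝕜 := ↑hA.eigenvectorUnitary with hU
  set V : Matrix n n 𝕜 := ↑hB.eigenvectorUnitary with hV
  have overlap_entry (i j : n) :
      (star U * V) i j = inner 𝕜 (hA.eigenvectorBasis i) (hB.eigenvectorBasis j) := by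
    simp [Matrix.mul_apply, star_apply, hU, hV, PiLp.inner_apply, mul_comm]
  have cyclic : (cfc f A * cfc g B).trace =
      (diagonal (ofReal ∘ f ∘ hA.eigenvalues) * (star U * V) *
        diagonal (ofReal ∘ g ∘ hB.eigenvalues) * star (star U * V)).trace := by
    rw [hA.cfc_eq, hB.cfc_eq, IsHermitian.cfc, IsHermitian.cfc, Unitary.conjStarAlgAut_apply,
      Unitary.conjStarAlgAut_apply, star_mul, star_star]
    simp only [mul_assoc]
    rw [trace_mul_comm]
    simp only [mul_assoc, hU, hV]
  rw [cyclic]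
  simp only [map_sum]
  refine Finset.sum_congr rfl fun i _ => ?_
  rw [diag_apply, mul_apply]
  refine Finset.sum_congr rfl fun j _ => ?_
  rw [mul_diagonal, diagonal_mul, star_apply, overlap_entry, eigenOverlap, map_mul,
    map_mul, map_pow, ← mul_conj]
  simp only [Function.comp_apply, star_def]
  ring

lemma eigenvalue_eq_zero_of_ker_le {A B : Matrix n n 𝕜} (hA : A.IsHermitian) (hB : B.IsHermitian)
    (hker : ∀ v, B *ᵥ v = 0 → A *ᵥ v = 0) {i j : n} (hij : eigenOverlap hA hB i j ≠ 0)
    (hj : hB.eigenvalues j = 0) : hA.eigenvalues i = 0 := by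
  set u := hA.eigenvectorBasis i
  set v := hB.eigenvectorBasis j
  have hAv : A *ᵥ v = 0 := hker _ (by rw [hB.mulVec_eigenvectorBasis, hj, zero_smul])
  have h : (hA.eigenvalues i : 𝕜) * inner 𝕜 u v = 0 := by
    calc (hA.eigenvalues i : 𝕜) * inner 𝕜 u v = v ⬝ᵥ star (A *ᵥ u) := by
          rw [hA.mulVec_eigenvectorBasis, EuclideanSpace.inner_eq_star_dotProduct]
          simp [star_smul, dotProduct_smul, RCLike.real_smul_eq_coe_mul, u]
      _ = A *ᵥ v ⬝ᵥ star (u : n → 𝕜) := by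
          rw [star_mulVec, hA.eq, dotProduct_comm, ← dotProduct_mulVec, dotProduct_comm]
      _ = 0 := by rw [hAv, zero_dotProduct]
  have huv : inner 𝕜 u v ≠ 0 := by simpa [eigenOverlap] using hij
  simpa [huv] using h

lemma re_trace_cfc_eq_sum_left {A B : Matrix n n 𝕜} (hA : A.IsHermitian) (hB : B.IsHermitian)
    (f : ℝ → ℝ) :
    re (cfc f A).trace = ∑ i, ∑ j, eigenOverlap hA hB i j * f (hA.eigenvalues i) := by
  have h := congr(re $(trace_cfc_mul_cfc hA hB f fun _ => 1))
  simpa only [cfc_const_one ℝ B, mul_one, ofReal_re] using h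

lemma re_trace_cfc_eq_sum_right {A B : Matrix n n 𝕜} (hA : A.IsHermitian) (hB : B.IsHermitian)
    (g : ℝ → ℝ) :
    re (cfc g B).trace = ∑ i, ∑ j, eigenOverlap hA hB i j * g (hB.eigenvalues j) := by
  have h := congr(re $(trace_cfc_mul_cfc hA hB (fun _ => 1) g))
  simpa only [cfc_const_one ℝ A, one_mul, ofReal_re] using h

lemma cfc_mul_cfc (A : Matrix n n 𝕜) (f g : ℝ → ℝ) :
    cfc f A * cfc g A = cfc (fun x => f x * g x) A :=
  (cfc_mul f g A (A.finite_real_spectrum.continuousOn f)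
    (A.finite_real_spectrum.continuousOn g)).symm

lemma cfc_sqrt_mul_self {A : Matrix n n 𝕜} (hA : A.PosSemidef) :
    cfc Real.sqrt A * cfc Real.sqrt A = A := by
  rw [cfc_mul_cfc]
  conv_rhs => rw [← cfc_id ℝ A hA.1.isSelfAdjoint]
  exact cfc_congr fun x hx => Real.mul_self_sqrt (spectrum_nonneg_of_nonneg hA.nonneg hx)

lemma re_trace_sq_cfc_sub_cfc {A B : Matrix n n 𝕜} (hA : A.IsHermitian) (hB : B.IsHermitian)
    (f g : ℝ → ℝ) :
    re ((cfc f A - cfc g B) * (cfc f A - cfc g B)).trace =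
      ∑ i, ∑ j, eigenOverlap hA hB i j * (f (hA.eigenvalues i) - g (hB.eigenvalues j)) ^ 2 := by
  have expand : re ((cfc f A - cfc g B) * (cfc f A - cfc g B)).trace =
      re (cfc (fun x => f x * f x) A).trace - 2 * re (cfc f A * cfc g B).trace +
        re (cfc (fun x => g x * g x) B).trace := by
    rw [← cfc_mul_cfc, ← cfc_mul_cfc, Matrix.sub_mul, Matrix.mul_sub, Matrix.mul_sub]
    simp only [trace_sub, map_sub]
    rw [trace_mul_comm (cfc g B) (cfc f A)]
    ring
  rw [expand, re_trace_cfc_eq_sum_left hA hB, trace_cfc_mul_cfc hA hB,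
    re_trace_cfc_eq_sum_right hA hB, ofReal_re]
  simp only [Finset.mul_sum, ← Finset.sum_sub_distrib, ← Finset.sum_add_distrib]
  exact Finset.sum_congr rfl fun i _ => Finset.sum_congr rfl fun j _ => by ring

lemma re_trace_cfc {A : Matrix n n 𝕜} (hA : A.IsHermitian) (f : ℝ → ℝ) :
    re (cfc f A).trace = ∑ i, f (hA.eigenvalues i) := by
  rw [hA.cfc_eq, IsHermitian.cfc, Unitary.conjStarAlgAut_apply, trace_mul_cycle,
    Unitary.coe_star_mul_self, one_mul, trace_diagonal]
  simp

/-- The entropy regularizer `r(Y) = Tr (Y log Y - Y)`, the counterpart of `matEntropy` for Hermitian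
matrices over `ℝ` or `ℂ` with any finite index type. -/
noncomputable def entropyRegularizer (Y : Matrix n n 𝕜) : ℝ :=
  re (cfc (fun x : ℝ => x * Real.log x - x) Y).trace

/-- Umegaki's relative entropy `D(Z ‖ X) = Tr (Z log Z - Z - Z log X + X)`, the Bregman divergence
of `entropyRegularizer`. As `Real.log 0 = 0`, it has this meaning only when `ker X ⊆ ker Z`; the
true value is `∞` otherwise. -/
noncomputable def relEntropy (Z X : Matrix n n 𝕜) : ℝ :=
  entropyRegularizer Z - re (Z * cfc Real.log X).trace + re X.trace

lemma relEntropy_eq_sum {Z X : Matrix n n 𝕜} (hZ : Z.IsHermitian) (hX : X.IsHermitian) :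
    relEntropy Z X = ∑ i, ∑ j, eigenOverlap hZ hX i j *
      ((hZ.eigenvalues i * Real.log (hZ.eigenvalues i) - hZ.eigenvalues i) -
        hZ.eigenvalues i * Real.log (hX.eigenvalues j) + hX.eigenvalues j) := by
  have cross := congr(re $(trace_cfc_mul_cfc hZ hX id Real.log))
  have trace_right := re_trace_cfc_eq_sum_right hZ hX id
  rw [cfc_id ℝ Z hZ.isSelfAdjoint, ofReal_re] at cross
  rw [cfc_id ℝ X hX.isSelfAdjoint] at trace_right
  rw [relEntropy, entropyRegularizer, re_trace_cfc_eq_sum_left hZ hX, cross, trace_right]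
  simp only [← Finset.sum_sub_distrib, ← Finset.sum_add_distrib, id, mul_add, mul_sub]

lemma sq_sqrt_sub_sqrt_le {z x : ℝ} (hz : 0 ≤ z) (hx : 0 ≤ x) (hzx : x = 0 → z = 0) :
    (√z - √x) ^ 2 ≤ (z * Real.log z - z) - z * Real.log x + x := by
  rcases hz.eq_or_lt with rfl | hz
  · simp [Real.sq_sqrt hx]
  have hx : 0 < x := hx.lt_of_ne' fun h => hz.ne' (hzx h)
  have log_sqrt_div : Real.log √(x / z) = (Real.log x - Real.log z) / 2 := by
    rw [Real.log_sqrt (by positivity), Real.log_div hx.ne' hz.ne']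
  have log_le := Real.log_le_sub_one_of_pos (Real.sqrt_pos.2 (div_pos hx hz))
  have hsqrt : z * √(x / z) = √z * √x := by
    rw [Real.sqrt_div hx.le]
    nth_rewrite 1 [← Real.mul_self_sqrt hz.le]
    field_simp
  have := mul_le_mul_of_nonneg_left log_le hz.le
  rw [log_sqrt_div, mul_sub z, hsqrt] at this
  linarith [sub_sq √z √x, Real.sq_sqrt hz.le, Real.sq_sqrt hx.le]

lemma re_trace_sq_sqrt_sub_sqrt_le_relEntropy {Z X : Matrix n n 𝕜} (hZ : Z.PosSemidef)
    (hX : X.PosSemidef) (hker : ∀ v, X *ᵥ v = 0 → Z *ᵥ v = 0) :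
    re ((cfc Real.sqrt Z - cfc Real.sqrt X) * (cfc Real.sqrt Z - cfc Real.sqrt X)).trace ≤
      relEntropy Z X := by
  rw [re_trace_sq_cfc_sub_cfc hZ.1 hX.1, relEntropy_eq_sum hZ.1 hX.1]
  refine Finset.sum_le_sum fun i _ => Finset.sum_le_sum fun j _ => ?_
  by_cases hij : eigenOverlap hZ.1 hX.1 i j = 0
  · simp only [hij, zero_mul, le_refl]
  · exact mul_le_mul_of_nonneg_left (sq_sqrt_sub_sqrt_le (hZ.eigenvalues_nonneg i)
      (hX.eigenvalues_nonneg j) (eigenvalue_eq_zero_of_ker_le hZ.1 hX.1 hker hij)) (sq_nonneg _)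

lemma relEntropy_nonneg {Z X : Matrix n n 𝕜} (hZ : Z.PosSemidef) (hX : X.PosSemidef)
    (hker : ∀ v, X *ᵥ v = 0 → Z *ᵥ v = 0) : 0 ≤ relEntropy Z X := by
  refine le_trans ?_ (re_trace_sq_sqrt_sub_sqrt_le_relEntropy hZ hX hker)
  rw [re_trace_sq_cfc_sub_cfc hZ.1 hX.1]
  exact Finset.sum_nonneg fun i _ => Finset.sum_nonneg fun j _ =>
    mul_nonneg (sq_nonneg _) (sq_nonneg _)

lemma re_trace_mul_le_add_relEntropy {A Z X : Matrix n n 𝕜} (hA : A.PosSemidef)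
    (hA_norm : ‖toEuclideanCLM (n := n) (𝕜 := 𝕜) A‖ ≤ 1 / 2) (hZ : Z.PosSemidef)
    (hX : X.PosSemidef) (hker : ∀ v, X *ᵥ v = 0 → Z *ᵥ v = 0) :
    re (A * Z).trace ≤ 2 * re (A * X).trace + relEntropy Z X := by
  have hP : (cfc Real.sqrt Z).IsHermitian := cfc_predicate _ _
  have hQ : (cfc Real.sqrt X).IsHermitian := cfc_predicate _ _
  have hellinger := re_trace_sq_sqrt_sub_sqrt_le_relEntropy hZ hX hker
  have parallelogram :=
    re_trace_mul_self_mul_conjTranspose_le hA (cfc Real.sqrt Z) (cfc Real.sqrt X)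
  have sq_diff_psd := posSemidef_self_mul_conjTranspose (cfc Real.sqrt Z - cfc Real.sqrt X)
  rw [hP.eq, hQ.eq, (hP.sub hQ).eq, cfc_sqrt_mul_self hZ, cfc_sqrt_mul_self hX] at parallelogram
  rw [(hP.sub hQ).eq] at sq_diff_psd
  have norm_bound := (re_trace_mul_le_opNorm hA.1 sq_diff_psd).trans
    (mul_le_mul_of_nonneg_right hA_norm (nonneg_iff.mp sq_diff_psd.trace_nonneg).1)
  linarith

lemma entropyRegularizer_of_not_isHermitian {Y : Matrix n n 𝕜} (hY : ¬ Y.IsHermitian) :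
    entropyRegularizer Y = 0 := by
  rw [entropyRegularizer, cfc_apply_of_not_predicate Y (isHermitian_iff_isSelfAdjoint.not.mp hY),
    trace_zero, map_zero]

lemma entropyRegularizer_eq_re_trace_mul_log {X : Matrix n n 𝕜} (hX : X.IsHermitian) :
    entropyRegularizer X = re (X * cfc Real.log X).trace - re X.trace := by
  have mul_log : X * cfc Real.log X = cfc (fun x : ℝ => x * Real.log x) X := by
    rw [← cfc_mul_cfc X (fun x => x) Real.log, cfc_id' ℝ X hX.isSelfAdjoint]
  rw [entropyRegularizer, cfc_sub (fun x : ℝ => x * Real.log x) (fun x => x) X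
    (X.finite_real_spectrum.continuousOn _), cfc_id' ℝ X hX.isSelfAdjoint, ← mul_log, trace_sub,
    map_sub]

lemma combo_relEntropy {X Y Z : Matrix n n 𝕜} {a b : ℝ} (hX : X.IsHermitian) (hab : a + b = 1)
    (hXYZ : a • Y + b • Z = X) :
    a * relEntropy Y X + b * relEntropy Z X =
      a * entropyRegularizer Y + b * entropyRegularizer Z - entropyRegularizer X := by
  have h : re (X * cfc Real.log X).trace =
      a * re (Y * cfc Real.log X).trace + b * re (Z * cfc Real.log X).trace := by
    nth_rewrite 1 [← hXYZ]
    simp [Matrix.add_mul, smul_re]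
  rw [entropyRegularizer_eq_re_trace_mul_log hX, h, relEntropy, relEntropy]
  linear_combination re X.trace * hab

/-- The objective `⟨S, Y⟩ - r(Y)` whose supremum over a set of matrices is the conjugate of the
entropy regularizer. -/
noncomputable def regularizedValue (S Y : Matrix n n 𝕜) : ℝ :=
  re (S * Y).trace - entropyRegularizer Y

/-- The conjugate `S ↦ sup_{Y ∈ K} (⟨S, Y⟩ - r(Y))` of the entropy regularizer restricted to a set
`K` of matrices. -/
noncomputable def entropyConj (K : Set (Matrix n n 𝕜)) (S : Matrix n n 𝕜) : ℝ :=
  sSup (regularizedValue S '' K)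

lemma regularizedValue_add_relEntropy_le {S X Y Z : Matrix n n 𝕜} {a b : ℝ} (hX : X.IsHermitian)
    (hY : 0 ≤ relEntropy Y X) (ha : 0 ≤ a) (hb : 0 < b) (hab : a + b = 1)
    (hXYZ : a • Y + b • Z = X) (hmax : regularizedValue S X ≤ regularizedValue S Y) :
    regularizedValue S Z + relEntropy Z X ≤ regularizedValue S Y := by
  have entropy_combo := combo_relEntropy hX hab hXYZ
  have trace_combo : re (S * X).trace = a * re (S * Y).trace + b * re (S * Z).trace := by
    simp [← hXYZ, Matrix.mul_add, smul_re]
  simp only [regularizedValue] at hmax ⊢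
  rw [trace_combo] at hmax
  obtain rfl : a = 1 - b := eq_sub_of_add_eq hab
  refine le_of_mul_le_mul_left ?_ hb
  linarith [mul_nonneg ha hY]

lemma regularizedValue_add_le_of_combo {A S X Y Z : Matrix n n 𝕜} {a b : ℝ} (hA : A.PosSemidef)
    (hA_norm : ‖toEuclideanCLM (n := n) (𝕜 := 𝕜) A‖ ≤ 1 / 2) (hY : Y.PosSemidef)
    (hZ : Z.PosSemidef) (ha : 0 < a) (hb : 0 < b) (hab : a + b = 1) (hXYZ : a • Y + b • Z = X)
    (hmax : regularizedValue S X ≤ regularizedValue S Y) :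
    regularizedValue (S + A) Z ≤ regularizedValue S Y + 2 * re (A * X).trace := by
  have haY : (a • Y).PosSemidef := hY.smul ha.le
  have hbZ : (b • Z).PosSemidef := hZ.smul hb.le
  have hX : X.PosSemidef := hXYZ ▸ haY.add hbZ
  have ker_le_left (v : n → 𝕜) (hv : X *ᵥ v = 0) : Y *ᵥ v = 0 := by
    have := mulVec_eq_zero_of_add haY hbZ (hXYZ ▸ hv)
    rwa [smul_mulVec, smul_eq_zero_iff_right ha.ne'] at this
  have ker_le_right (v : n → 𝕜) (hv : X *ᵥ v = 0) : Z *ᵥ v = 0 := by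
    have := mulVec_eq_zero_of_add hbZ haY (add_comm (a • Y) (b • Z) ▸ hXYZ ▸ hv)
    rwa [smul_mulVec, smul_eq_zero_iff_right hb.ne'] at this
  have optimality := regularizedValue_add_relEntropy_le hX.1 (relEntropy_nonneg hY hX ker_le_left)
    ha.le hb hab hXYZ hmax
  have perturbation := re_trace_mul_le_add_relEntropy hA hA_norm hZ hX ker_le_right
  simp only [regularizedValue, Matrix.add_mul, trace_add, map_add] at optimality ⊢
  linarith

lemma regularizedValue_add_le_of_isMaxOn {K : Set (Matrix n n 𝕜)} {A S Y Z : Matrix n n 𝕜}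
    (hK : Convex ℝ K) (hK_psd : ∀ W ∈ K, W.PosSemidef) (hA : A.PosSemidef)
    (hA_norm : ‖toEuclideanCLM (n := n) (𝕜 := 𝕜) A‖ ≤ 1 / 2) (hY : Y ∈ K)
    (hmax : IsMaxOn (regularizedValue S) K Y) (hZ : Z ∈ K) :
    regularizedValue (S + A) Z ≤ regularizedValue S Y + 2 * re (A * Y).trace := by
  let X (t : ℝ) : Matrix n n 𝕜 := (1 - t) • Y + t • Z
  have bound (t : ℝ) (ht : t ∈ Set.Ioo 0 1) :
      regularizedValue (S + A) Z ≤ regularizedValue S Y + 2 * re (A * X t).trace :=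
    regularizedValue_add_le_of_combo hA hA_norm (hK_psd Y hY) (hK_psd Z hZ) (sub_pos.2 ht.2) ht.1
      (sub_add_cancel 1 t) rfl (hmax (hK hY hZ (sub_pos.2 ht.2).le ht.1.le (sub_add_cancel 1 t)))
  have hcont : Continuous fun t => regularizedValue S Y + 2 * re (A * X t).trace := by
    fun_prop
  have hlim : Filter.Tendsto (fun t => regularizedValue S Y + 2 * re (A * X t).trace)
      (nhdsWithin 0 (Set.Ioi 0)) (nhds (regularizedValue S Y + 2 * re (A * Y).trace)) := by
    simpa [X] using (hcont.tendsto 0).mono_left nhdsWithin_le_nhds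
  exact ge_of_tendsto hlim (Filter.mem_of_superset (Ioo_mem_nhdsGT zero_lt_one) bound)

theorem bregman_divergence_rStar_le_general {K : Set (Matrix n n 𝕜)} {A S Y : Matrix n n 𝕜}
    (hK : Convex ℝ K) (hK_psd : ∀ W ∈ K, W.PosSemidef) (hA : A.PosSemidef)
    (hA_norm : ‖toEuclideanCLM (n := n) (𝕜 := 𝕜) A‖ ≤ 1 / 2) (hY : Y ∈ K)
    (hmax : IsMaxOn (regularizedValue S) K Y) :
    entropyConj K (S + A) - entropyConj K S - re (Y * A).trace ≤ re (A * Y).trace := by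
  have lower : regularizedValue S Y ≤ entropyConj K S :=
    le_csSup ⟨_, Set.forall_mem_image.2 hmax⟩ (Set.mem_image_of_mem _ hY)
  have upper : entropyConj K (S + A) ≤ regularizedValue S Y + 2 * re (A * Y).trace :=
    csSup_le ⟨_, Set.mem_image_of_mem _ hY⟩ <| Set.forall_mem_image.2 fun _ hZ =>
      regularizedValue_add_le_of_isMaxOn hK hK_psd hA hA_norm hY hmax hZ
  rw [trace_mul_comm Y A]
  linarith

lemma matEntropy_eq_entropyRegularizer {d : ℕ} (Y : Matrix (Fin d) (Fin d) ℝ) :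
    matEntropy Y = entropyRegularizer Y := by
  unfold matEntropy
  split_ifs with hY
  · rw [entropyRegularizer]
    convert (re_trace_cfc hY fun x => x * Real.log x - x).symm
  · exact (entropyRegularizer_of_not_isHermitian hY).symm

lemma rStar_eq_entropyConj (d k : ℕ) : rStar d k = entropyConj (Fantope d k) := by
  funext S
  simp only [rStar, minner, matEntropy_eq_entropyRegularizer]
  rfl

lemma convex_fantope (d k : ℕ) : Convex ℝ (Fantope d k) := by
  rintro Y ⟨hY, hY_le, hY_trace⟩ Z ⟨hZ, hZ_le, hZ_trace⟩ a b ha hb hab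
  refine ⟨(hY.smul ha).add (hZ.smul hb), ?_, ?_⟩
  · have : 1 - (a • Y + b • Z) = a • (1 - Y) + b • (1 - Z) := by
      obtain rfl : a = 1 - b := eq_sub_of_add_eq hab
      module
    exact this ▸ (hY_le.smul ha).add (hZ_le.smul hb)
  · rw [trace_add, trace_smul, trace_smul, hY_trace, hZ_trace, ← add_smul, hab, one_smul]

end

/-- Refined divergence bound: `V^{r*}_S(S + ηG) ≤ ⟨ηG, ∇r*(S)⟩`. -/
theorem bregman_divergence_rStar_le {d k : ℕ} (hd : 1 ≤ d) (hk1 : 1 ≤ k) (hkd : k ≤ d)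
    (S : Matrix (Fin d) (Fin d) ℝ) (hS : S.IsHermitian)
    (G : Matrix (Fin d) (Fin d) ℝ) (hG : G.PosSemidef)
    (η : ℝ) (hη : 0 < η) (hηG : opNorm (η • G) ≤ 1 / 2)
    (YS : Matrix (Fin d) (Fin d) ℝ) (hYS : YS ∈ Fantope d k)
    (hYSmax : ∀ Z ∈ Fantope d k,
      minner S Z - matEntropy Z ≤ minner S YS - matEntropy YS) :
    rStar d k (S + η • G) - rStar d k S - minner YS (η • G) ≤ minner (η • G) YS := by
  simp only [minner, matEntropy_eq_entropyRegularizer] at hYSmax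
  rw [rStar_eq_entropyConj]
  exact bregman_divergence_rStar_le_general (convex_fantope d k) (fun _ hZ => hZ.1)
    (hG.smul hη.le) hηG hYS hYSmax
end

section
/- Let S be a symmetric d×d matrix at which r* (viewed as a real-valued function on the vector space of symmetric d×d matrices) is twice differentiable. Then for every symmetric positive semidefinite d×d matrix G, the second derivative of r* at S satisfies D²r*(S)[G, G] ≤ ⟨∇r*(S), G²⟩ = Tr(∇r*(S)·G²). -/
open Finset

attribute [local instance] Matrix.normedAddCommGroup Matrix.normedSpace

/-!
A Hessian of `r*` is bounded by inverting a lower bound on the curvature of `r`. The Bregman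
divergence of `r` is the relative entropy `D(Z, Y) = Tr(Z log Z - Z log Y - Z + Y)`, and at the
maximiser `Y = ∇r*(S)` the objective drops by at least `D(Z, Y)` when `Y` is replaced by another
point `Z` of the Fantope. Expanding in the eigenbases of `Z` and `Y` reduces the Pinsker-type bound
`Tr(G(Z - Y)) - Tr(G²(Z/6 + Y/3)) ≤ D(Z, Y)` to a scalar inequality.

Taking for `Z` the maximiser at `S + G` turns this bound into
`r*(S + G) ≤ r*(S) + ⟨G, Y⟩ + ⟨G², ∇r*(S + G)⟩/6 + ⟨G², Y⟩/3`. Since `1/6 + 1/3 = 1/2`, replacing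
`G` by `t G` and letting `t` decrease to `0` bounds the second-order Taylor coefficient
`D²r*(S)[G, G]/2` by `⟨G², Y⟩/2`.
-/

open Filter InformationTheory Matrix Topology

section Scalar

lemma three_mul_sq_sub_one_le_klFun {x : ℝ} (hx : 0 ≤ x) :
    3 * (x - 1) ^ 2 ≤ (2 * x + 4) * klFun x := by
  let φ : ℝ → ℝ := fun x => (2 * x + 4) * klFun x - 3 * (x - 1) ^ 2
  let φ' : ℝ → ℝ := fun x => 2 * klFun x + (2 * x + 4) * Real.log x - 6 * (x - 1)
  have hφ {x : ℝ} (hx : 0 < x) : HasDerivAt φ (φ' x) x := by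
    have hlin : HasDerivAt (fun x : ℝ => 2 * x + 4) 2 x := by
      simpa using ((hasDerivAt_id x).const_mul 2).add_const 4
    have hsq : HasDerivAt (fun x : ℝ => 3 * (x - 1) ^ 2) (6 * (x - 1)) x :=
      ((((hasDerivAt_id x).sub_const 1).pow 2).const_mul 3).congr_deriv (by simp; ring)
    exact (hlin.mul (hasDerivAt_klFun hx.ne')).sub hsq
  have hφ' {x : ℝ} (hx : 0 < x) : HasDerivAt φ' (4 * (Real.log x - (1 - x⁻¹))) x := by
    have hlin : HasDerivAt (fun x : ℝ => 2 * x + 4) 2 x := by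
      simpa using ((hasDerivAt_id x).const_mul 2).add_const 4
    have hsub : HasDerivAt (fun x : ℝ => 6 * (x - 1)) 6 x := by
      simpa using ((hasDerivAt_id x).sub_const 1).const_mul 6
    refine ((((hasDerivAt_klFun hx.ne').const_mul 2).add
      (hlin.mul (Real.hasDerivAt_log hx.ne'))).sub hsub).congr_deriv ?_
    field_simp
    ring
  have hconv : ConvexOn ℝ (Set.Ici 0) φ := by
    refine convexOn_of_hasDerivWithinAt2_nonneg (f' := φ')
      (f'' := fun x => 4 * (Real.log x - (1 - x⁻¹))) (convex_Ici 0) ?_ ?_ ?_ ?_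
    · have := continuous_klFun
      fun_prop
    all_goals
      rw [interior_Ici]
      intro x (hx : 0 < x)
    · exact (hφ hx).hasDerivWithinAt
    · exact (hφ' hx).hasDerivWithinAt
    · linarith [Real.one_sub_inv_le_log_of_pos hx]
  have hmin : IsMinOn φ (Set.Ici 0) 1 := by
    refine hconv.isMinOn_of_rightDeriv_eq_zero (by simp) ?_
    rw [(hφ one_pos).hasDerivWithinAt.derivWithin (uniqueDiffWithinAt_Ioi 1)]
    simp [φ', klFun_one]
  have : φ 1 ≤ φ x := hmin hx
  simp only [φ, klFun_one] at this
  linarith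

lemma mul_mul_sub_sub_sq_mul_le {y z : ℝ} (hz : 0 ≤ z) (hy : 0 < y) (v x : ℝ) :
    v * x * (z - y) - x ^ 2 * (z / 6 + y / 3) ≤
      v ^ 2 * (z * Real.log z - z * Real.log y - z + y) := by
  set D := z * Real.log z - z * Real.log y - z + y with hD_def
  have hc : 0 < 2 * z + 4 * y := by positivity
  have hD : D = y * klFun (z / y) := by
    rcases hz.eq_or_lt with rfl | hz
    · simp [D, klFun_zero]
    · rw [hD_def, klFun_apply, Real.log_div hz.ne' hy.ne']
      field_simp
      ring
  have hpinsker : 3 * (z - y) ^ 2 ≤ (2 * z + 4 * y) * D := by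
    have h := three_mul_sq_sub_one_le_klFun (div_nonneg hz hy.le)
    calc 3 * (z - y) ^ 2 = y ^ 2 * (3 * (z / y - 1) ^ 2) := by field_simp
      _ ≤ y ^ 2 * ((2 * (z / y) + 4) * klFun (z / y)) := by gcongr
      _ = (2 * z + 4 * y) * D := by rw [hD]; field_simp
  refine le_of_mul_le_mul_left ?_ hc
  calc (2 * z + 4 * y) * (v * x * (z - y) - x ^ 2 * (z / 6 + y / 3))
      = v ^ 2 * (3 * (z - y) ^ 2) - (6 * v * (z - y) - x * (2 * z + 4 * y)) ^ 2 / 12 := by ring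
    _ ≤ v ^ 2 * (3 * (z - y) ^ 2) := sub_le_self _ (by positivity)
    _ ≤ v ^ 2 * ((2 * z + 4 * y) * D) := by gcongr
    _ = (2 * z + 4 * y) * (v ^ 2 * D) := by ring

lemma exists_sum_min_one_exp_sub_eq {ι : Type*} [Fintype ι] (s : ι → ℝ) {c : ℝ} (hc : 0 < c)
    (hcard : c ≤ Fintype.card ι) : ∃ ν : ℝ, ∑ i, min 1 (Real.exp (s i - ν)) = c := by
  let F : ℝ → ℝ := fun ν => ∑ i, min 1 (Real.exp (s i - ν))
  have hF : Continuous F := by fun_prop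
  have hle : ∃ ν, F ν ≤ c := by
    have hlim : Tendsto F atTop (𝓝 0) := by
      have hterm (i : ι) :
          Tendsto (fun ν => min 1 (Real.exp (s i - ν))) atTop (𝓝 0) := by
        have hexp : Tendsto (fun ν => Real.exp (s i - ν)) atTop (𝓝 0) :=
          Real.tendsto_exp_atBot.comp
            (tendsto_atBot_add_const_left _ (s i) tendsto_neg_atTop_atBot)
        simpa using (tendsto_const_nhds (x := (1 : ℝ))).min hexp
      simpa using tendsto_finsetSum Finset.univ fun i _ => hterm i
    exact (hlim.eventually_le_const hc).exists
  have hge : ∃ ν, c ≤ F ν := by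
    obtain ⟨ν, hν⟩ := (Set.finite_range s).bddBelow
    refine ⟨ν, hcard.trans_eq ?_⟩
    have hterm (i : ι) : min 1 (Real.exp (s i - ν)) = 1 :=
      min_eq_left (Real.one_le_exp (sub_nonneg.mpr (hν ⟨i, rfl⟩)))
    simp [F, hterm]
  exact mem_range_of_exists_le_of_exists_ge hF hle hge

end Scalar

section FunctionalCalculus

variable {n : Type*} [Fintype n] [DecidableEq n] {A B : Matrix n n ℝ}

/-- The matrix `M` read between the eigenbases of `A` (rows) and `B` (columns). In these coordinates
traces mixing functions of `A` and `B` are double sums over the two families of eigenvalues. -/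
noncomputable def eigenbasisMatrix (hA : A.IsHermitian) (hB : B.IsHermitian) (M : Matrix n n ℝ) :
    Matrix n n ℝ :=
  (hA.eigenvectorUnitary : Matrix n n ℝ)ᵀ * M * (hB.eigenvectorUnitary : Matrix n n ℝ)

lemma cfc_eq_mul_diagonal_mul_transpose (hA : A.IsHermitian) (f : ℝ → ℝ) :
    cfc f A = hA.eigenvectorUnitary * diagonal (fun i => f (hA.eigenvalues i)) *
      (hA.eigenvectorUnitary : Matrix n n ℝ)ᵀ := by
  rw [hA.cfc_eq, IsHermitian.cfc, Unitary.conjStarAlgAut_apply, star_eq_conjTranspose,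
    conjTranspose_eq_transpose_of_trivial]
  rfl

lemma continuousOn_spectrum (A : Matrix n n ℝ) (f : ℝ → ℝ) : ContinuousOn f (spectrum ℝ A) :=
  A.finite_real_spectrum.continuousOn f

lemma mul_cfc_self (hA : A.IsHermitian) (f : ℝ → ℝ) : A * cfc f A = cfc (fun x => x * f x) A := by
  have hA' : IsSelfAdjoint A := hA
  rw [cfc_mul (fun x => x) f A (continuousOn_spectrum A _) (continuousOn_spectrum A _),
    cfc_id' ℝ A]

lemma sub_cfc_log_cfc_min_one_exp (hA : A.IsHermitian) (ν : ℝ) :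
    A - cfc Real.log (cfc (fun s => min 1 (Real.exp (s - ν))) A) =
      ν • 1 + cfc (fun s => max (s - ν) 0) A := by
  have hA' : IsSelfAdjoint A := hA
  let y : ℝ → ℝ := fun s => min 1 (Real.exp (s - ν))
  have hscalar (s : ℝ) : s - Real.log (y s) = ν + max (s - ν) 0 := by
    rcases le_total s ν with h | h
    all_goals simp [y, h]
  have hcomp : cfc Real.log (cfc y A) = cfc (fun s => Real.log (y s)) A :=
    (cfc_comp' Real.log y A ((A.finite_real_spectrum.image y).continuousOn _)).symm
  calc A - cfc Real.log (cfc y A) = cfc (fun s => s - Real.log (y s)) A := by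
        rw [hcomp, cfc_sub (fun s => s) _ A continuousOn_id (continuousOn_spectrum A _),
          cfc_id' ℝ A]
    _ = ν • 1 + cfc (fun s => max (s - ν) 0) A := by
        simp only [hscalar]
        rw [cfc_const_add .., Algebra.algebraMap_eq_smul_one]

open scoped MatrixOrder in
lemma posSemidef_cfc (A : Matrix n n ℝ) {f : ℝ → ℝ} (hf : ∀ x, 0 ≤ f x) : (cfc f A).PosSemidef :=
  (cfc_nonneg fun x _ => hf x).posSemidef

open scoped MatrixOrder in
lemma posDef_cfc (hA : A.IsHermitian) {f : ℝ → ℝ} (hf : ∀ x, 0 < f x) : (cfc f A).PosDef :=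
  ((cfc_isStrictlyPositive_iff f A (continuousOn_spectrum A f) hA).2 fun x _ => hf x).posDef

lemma trace_cfc (hA : A.IsHermitian) (f : ℝ → ℝ) :
    (cfc f A).trace = ∑ i, f (hA.eigenvalues i) := by
  have hU : (hA.eigenvectorUnitary : Matrix n n ℝ)ᵀ * (hA.eigenvectorUnitary : Matrix n n ℝ) = 1 :=
    Unitary.coe_star_mul_self hA.eigenvectorUnitary
  rw [cfc_eq_mul_diagonal_mul_transpose hA, trace_mul_comm, ← Matrix.mul_assoc, hU,
    Matrix.one_mul, trace_diagonal]

lemma trace_cfc_mul_mul_cfc_mul_transpose (hA : A.IsHermitian) (hB : B.IsHermitian) (f g : ℝ → ℝ)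
    (M N : Matrix n n ℝ) :
    (cfc f A * M * cfc g B * Nᵀ).trace =
      ∑ i, ∑ j, f (hA.eigenvalues i) * g (hB.eigenvalues j) *
        (eigenbasisMatrix hA hB M i j * eigenbasisMatrix hA hB N i j) := by
  have hcycle : (cfc f A * M * cfc g B * Nᵀ).trace =
      (diagonal (fun i => f (hA.eigenvalues i)) * eigenbasisMatrix hA hB M *
        diagonal (fun j => g (hB.eigenvalues j)) * (eigenbasisMatrix hA hB N)ᵀ).trace := by
    rw [cfc_eq_mul_diagonal_mul_transpose hA, cfc_eq_mul_diagonal_mul_transpose hB]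
    simp only [eigenbasisMatrix, transpose_mul, transpose_transpose, Matrix.mul_assoc]
    rw [trace_mul_comm]
    simp only [Matrix.mul_assoc]
  rw [hcycle]
  refine Finset.sum_congr rfl fun i _ => (mul_apply ..).trans (Finset.sum_congr rfl fun j _ => ?_)
  rw [mul_diagonal, diagonal_mul, transpose_apply]
  ring

lemma trace_smul_add_smul_eq_sum (hA : A.IsHermitian) (hB : B.IsHermitian) (α β : ℝ)
    (M N : Matrix n n ℝ) :
    (α • (A * M * Nᵀ) + β • (M * B * Nᵀ)).trace =
      ∑ i, ∑ j, (α * hA.eigenvalues i + β * hB.eigenvalues j) *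
        (eigenbasisMatrix hA hB M i j * eigenbasisMatrix hA hB N i j) := by
  have hA' : IsSelfAdjoint A := hA
  have hB' : IsSelfAdjoint B := hB
  have hleft := trace_cfc_mul_mul_cfc_mul_transpose hA hB id (fun _ => 1) M N
  have hright := trace_cfc_mul_mul_cfc_mul_transpose hA hB (fun _ => 1) id M N
  rw [cfc_id ℝ A, cfc_const_one ℝ B, Matrix.mul_one] at hleft
  rw [cfc_id ℝ B, cfc_const_one ℝ A, Matrix.one_mul] at hright
  rw [trace_add, trace_smul, trace_smul, hleft, hright]
  simp only [smul_eq_mul, Finset.mul_sum, ← Finset.sum_add_distrib, id, mul_one, one_mul, add_mul,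
    mul_assoc]

lemma trace_mul_nonneg_of_posSemidef {m : Type*} [Fintype m] {P Q : Matrix m m ℝ}
    (hP : P.PosSemidef) (hQ : Q.PosSemidef) : 0 ≤ (P * Q).trace := by
  classical
  have hP' : IsSelfAdjoint P := hP.isHermitian
  have hQ' : IsSelfAdjoint Q := hQ.isHermitian
  have h := trace_cfc_mul_mul_cfc_mul_transpose hP.isHermitian hQ.isHermitian id id 1 1
  simp only [cfc_id ℝ P, cfc_id ℝ Q, Matrix.mul_one, transpose_one] at h
  rw [h]
  exact Finset.sum_nonneg fun i _ => Finset.sum_nonneg fun j _ =>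
    mul_nonneg (mul_nonneg (hP.eigenvalues_nonneg i) (hQ.eigenvalues_nonneg j))
      (mul_self_nonneg _)

/-- Umegaki's relative entropy `Tr(Z log Z - Z log Y - Z + Y)`, the Bregman divergence of `r`. For
singular `Y` the convention `log 0 = 0` gives a finite value where the true one may be `+∞`. -/
noncomputable def matRelEntropy (Z Y : Matrix n n ℝ) : ℝ :=
  (Z * (cfc Real.log Z - cfc Real.log Y) - Z + Y).trace

lemma matRelEntropy_eq_sum {Z Y : Matrix n n ℝ} (hZ : Z.IsHermitian) (hY : Y.IsHermitian) :
    matRelEntropy Z Y = ∑ i, ∑ j,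
      (hZ.eigenvalues i * Real.log (hZ.eigenvalues i)
        - hZ.eigenvalues i * Real.log (hY.eigenvalues j) - hZ.eigenvalues i + hY.eigenvalues j) *
      eigenbasisMatrix hZ hY 1 i j ^ 2 := by
  have hZ' : IsSelfAdjoint Z := hZ
  have hY' : IsSelfAdjoint Y := hY
  have hZlogZ : (Z * cfc Real.log Z).trace =
      (cfc (fun z => z * Real.log z) Z * 1 * cfc (fun _ => (1 : ℝ)) Y * 1ᵀ).trace := by
    simp [mul_cfc_self hZ, cfc_const_one ℝ Y]
  have hZlogY : (Z * cfc Real.log Y).trace =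
      (cfc (fun z : ℝ => z) Z * 1 * cfc Real.log Y * 1ᵀ).trace := by
    simp [cfc_id' ℝ Z]
  have hlinear := trace_smul_add_smul_eq_sum hZ hY 1 (-1) 1 1
  simp only [transpose_one, Matrix.mul_one, Matrix.one_mul, one_smul, neg_smul, trace_add,
    trace_neg] at hlinear
  calc matRelEntropy Z Y
      = (Z * cfc Real.log Z).trace - (Z * cfc Real.log Y).trace - (Z.trace + -Y.trace) := by
        simp only [matRelEntropy, Matrix.mul_sub, trace_add, trace_sub]
        ring
    _ = _ := by
        rw [hZlogZ, hZlogY, hlinear, trace_cfc_mul_mul_cfc_mul_transpose hZ hY,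
          trace_cfc_mul_mul_cfc_mul_transpose hZ hY]
        simp only [← Finset.sum_sub_distrib]
        exact Finset.sum_congr rfl fun i _ => Finset.sum_congr rfl fun j _ => by ring

/-- A Pinsker inequality in dual form: the supremum over `G` of the left-hand side is a squared
distance between `Z` and `Y`. -/
lemma trace_mul_sub_sub_trace_sq_mul_le_matRelEntropy {Z Y G : Matrix n n ℝ} (hZ : Z.PosSemidef)
    (hY : Y.PosDef) (hG : G.IsHermitian) :
    (G * (Z - Y)).trace - (G * G * ((1 / 6 : ℝ) • Z + (1 / 3 : ℝ) • Y)).trace ≤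
      matRelEntropy Z Y := by
  have hGt : Gᵀ = G := by simpa using hG.eq
  have hlinear : (G * (Z - Y)).trace = _ :=
    calc (G * (Z - Y)).trace = ((1 : ℝ) • (Z * 1 * Gᵀ) + (-1 : ℝ) • (1 * Y * Gᵀ)).trace := by
          simp [hGt, Matrix.mul_add, trace_mul_comm _ G, sub_eq_add_neg]
      _ = _ := trace_smul_add_smul_eq_sum hZ.isHermitian hY.isHermitian 1 (-1) 1 G
  have hquadratic : (G * G * ((1 / 6 : ℝ) • Z + (1 / 3 : ℝ) • Y)).trace = _ :=
    calc (G * G * ((1 / 6 : ℝ) • Z + (1 / 3 : ℝ) • Y)).trace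
        = ((1 / 6 : ℝ) • (Z * G * Gᵀ) + (1 / 3 : ℝ) • (G * Y * Gᵀ)).trace := by
          simp [hGt, Matrix.mul_add, Matrix.mul_assoc, trace_mul_comm Z, trace_mul_cycle' G Y G]
      _ = _ := trace_smul_add_smul_eq_sum hZ.isHermitian hY.isHermitian (1 / 6) (1 / 3) G G
  rw [hlinear, hquadratic, matRelEntropy_eq_sum hZ.isHermitian hY.isHermitian]
  simp only [← Finset.sum_sub_distrib]
  refine Finset.sum_le_sum fun i _ => Finset.sum_le_sum fun j _ => ?_
  have h := mul_mul_sub_sub_sq_mul_le (hZ.eigenvalues_nonneg i) (hY.eigenvalues_pos j)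
    (eigenbasisMatrix hZ.isHermitian hY.isHermitian 1 i j)
    (eigenbasisMatrix hZ.isHermitian hY.isHermitian G i j)
  linarith

end FunctionalCalculus

section Entropy

variable {d k : ℕ} {S Z Y G : Matrix (Fin d) (Fin d) ℝ}

lemma matEntropy_eq_trace (hZ : Z.IsHermitian) :
    matEntropy Z = (Z * cfc Real.log Z - Z).trace := by
  rw [matEntropy, dif_pos hZ, trace_sub, mul_cfc_self hZ, trace_cfc hZ,
    hZ.trace_eq_sum_eigenvalues, ← Finset.sum_sub_distrib]
  simp

lemma minner_sub_matEntropy_add_matRelEntropy (hZ : Z.IsHermitian) (hY : Y.IsHermitian) :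
    minner S Z - matEntropy Z + matRelEntropy Z Y =
      minner S Y - matEntropy Y + minner (S - cfc Real.log Y) (Z - Y) := by
  rw [matEntropy_eq_trace hZ, matEntropy_eq_trace hY]
  simp only [minner, matRelEntropy, Matrix.mul_sub, Matrix.sub_mul, trace_sub, trace_add]
  rw [trace_mul_comm (cfc Real.log Y) Z, trace_mul_comm (cfc Real.log Y) Y]
  ring

/-- The maximiser of `⟨S, ·⟩ - r` is `Y = min(I, exp(S - ν I))`, with `ν` fixed by the trace:
`S - log Y - ν I` is positive semidefinite and supported where `Y = I`. -/
lemma exists_posDef_mem_fantope_minner_sub_log_nonpos (hS : S.IsHermitian) (hk : 0 < k)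
    (hkd : k ≤ d) :
    ∃ Y ∈ Fantope d k, Y.PosDef ∧
      ∀ Z ∈ Fantope d k, minner (S - cfc Real.log Y) (Z - Y) ≤ 0 := by
  have hS' : IsSelfAdjoint S := hS
  obtain ⟨ν, hν⟩ := exists_sum_min_one_exp_sub_eq hS.eigenvalues (Nat.cast_pos.mpr hk)
    (by simpa using hkd)
  let y : ℝ → ℝ := fun s => min 1 (Real.exp (s - ν))
  set L := cfc (fun s => max (s - ν) 0) S with hL_def
  have hYpos : (cfc y S).PosDef := posDef_cfc hS fun s => by positivity
  have hYtrace : (cfc y S).trace = k := by rw [trace_cfc hS, ← hν]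
  have hYle : (1 - cfc y S).PosSemidef := by
    rw [← cfc_const_one ℝ S, ← cfc_sub ..]
    exact posSemidef_cfc S fun s => sub_nonneg.mpr (min_le_left ..)
  have hLY : L * cfc y S = L := by
    rw [← cfc_mul ..]
    refine cfc_congr fun s _ => ?_
    rcases le_total s ν with h | h
    · simp [h]
    · simp [y, h]
  refine ⟨cfc y S, ⟨hYpos.posSemidef, hYle, hYtrace⟩, hYpos, fun Z ⟨_, hZle, hZtrace⟩ => ?_⟩
  have hL : 0 ≤ (L * (1 - Z)).trace :=
    trace_mul_nonneg_of_posSemidef (posSemidef_cfc S fun s => le_max_right ..) hZle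
  calc minner (S - cfc Real.log (cfc y S)) (Z - cfc y S) = -(L * (1 - Z)).trace := by
        rw [sub_cfc_log_cfc_min_one_exp hS]
        simp [minner, ← hL_def, Matrix.add_mul, Matrix.mul_sub, hLY, hZtrace, hYtrace]
    _ ≤ 0 := neg_nonpos.mpr hL

lemma minner_symmetrize (S : Matrix (Fin d) (Fin d) ℝ) (hZ : Z.IsHermitian) :
    minner ((1 / 2 : ℝ) • (S + Sᵀ)) Z = minner S Z := by
  have hZt : Zᵀ = Z := by simpa using hZ.eq
  have htranspose : (Sᵀ * Z).trace = (S * Z).trace := by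
    rw [← trace_transpose, transpose_mul, transpose_transpose, hZt, trace_mul_comm]
  simp only [minner, smul_mul, trace_smul, Matrix.add_mul, trace_add, htranspose, smul_eq_mul]
  ring

lemma fantope_zero (d : ℕ) : Fantope d 0 = {0} := by
  refine Set.Subset.antisymm (fun Z hZ => ?_) ?_
  · exact hZ.1.trace_eq_zero_iff.mp (by simpa using hZ.2.2)
  · simp [Fantope, PosSemidef.zero, PosSemidef.one]

lemma exists_mem_fantope_quadratic_growth (S : Matrix (Fin d) (Fin d) ℝ) (hkd : k ≤ d) :
    ∃ Y ∈ Fantope d k, ∀ Z ∈ Fantope d k, ∀ G : Matrix (Fin d) (Fin d) ℝ, G.IsHermitian →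
      minner S Z - matEntropy Z +
        (minner G (Z - Y) - minner (G * G) ((1 / 6 : ℝ) • Z + (1 / 3 : ℝ) • Y)) ≤
      minner S Y - matEntropy Y := by
  rcases k.eq_zero_or_pos with rfl | hk
  · refine ⟨0, by simp [fantope_zero], fun Z hZ G _ => ?_⟩
    obtain rfl : Z = 0 := by simpa [fantope_zero] using hZ
    simp [minner]
  have hT : ((1 / 2 : ℝ) • (S + Sᵀ)).IsHermitian :=
    (isHermitian_add_transpose_self S).smul (IsSelfAdjoint.all _)
  obtain ⟨Y, hY, hYpos, hopt⟩ := exists_posDef_mem_fantope_minner_sub_log_nonpos hT hk hkd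
  refine ⟨Y, hY, fun Z hZ G hG => ?_⟩
  have hpinsker := trace_mul_sub_sub_trace_sq_mul_le_matRelEntropy hZ.1 hYpos hG
  have hpoint := minner_sub_matEntropy_add_matRelEntropy (S := (1 / 2 : ℝ) • (S + Sᵀ))
    hZ.1.isHermitian hYpos.isHermitian
  rw [minner_symmetrize S hZ.1.isHermitian, minner_symmetrize S hYpos.isHermitian] at hpoint
  have hle := hopt Z hZ
  simp only [minner] at hpoint hle ⊢
  linarith

end Entropy

section Maximiser

variable {d k : ℕ} {S Z Y G : Matrix (Fin d) (Fin d) ℝ}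

/-- `Y` is the maximiser that defines `r*(S)`, that is `Y = ∇r*(S)`. -/
def IsRStarMaximizer (k : ℕ) (S Y : Matrix (Fin d) (Fin d) ℝ) : Prop :=
  Y ∈ Fantope d k ∧ IsMaxOn (fun Z => minner S Z - matEntropy Z) (Fantope d k) Y

lemma le_of_mem_fantope (hY : Y ∈ Fantope d k) : k ≤ d := by
  have h := hY.2.1.trace_nonneg
  rw [trace_sub, trace_one, Fintype.card_fin, hY.2.2, sub_nonneg] at h
  exact_mod_cast h

lemma minner_sq_le_of_mem_fantope (hZ : Z ∈ Fantope d k) (hY : Y ∈ Fantope d k)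
    (hG : G.IsHermitian) :
    minner (G * G) ((1 / 6 : ℝ) • Z + (1 / 3 : ℝ) • Y) ≤ 1 / 2 * minner G G := by
  have hGG : (G * G).PosSemidef := by
    simpa only [hG.eq] using posSemidef_self_mul_conjTranspose G
  have hZ' := trace_mul_nonneg_of_posSemidef hGG hZ.2.1
  have hY' := trace_mul_nonneg_of_posSemidef hGG hY.2.1
  simp only [minner, Matrix.mul_sub, Matrix.mul_one, Matrix.mul_add, Matrix.mul_smul, trace_sub,
    trace_add, trace_smul, smul_eq_mul] at hZ' hY' ⊢
  linarith

lemma exists_isRStarMaximizer (S : Matrix (Fin d) (Fin d) ℝ) (hkd : k ≤ d) :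
    ∃ Y, IsRStarMaximizer k S Y := by
  obtain ⟨Y, hY, hgrowth⟩ := exists_mem_fantope_quadratic_growth S hkd
  refine ⟨Y, hY, fun Z hZ => ?_⟩
  simpa [minner] using hgrowth Z hZ 0 isHermitian_zero

namespace IsRStarMaximizer

lemma rStar_eq (hY : IsRStarMaximizer k S Y) : rStar d k S = minner S Y - matEntropy Y :=
  IsGreatest.csSup_eq ⟨Set.mem_image_of_mem _ hY.1, Set.forall_mem_image.mpr hY.2⟩

/-- `Y` is the point furnished by `exists_mem_fantope_quadratic_growth`: testing the growth with
`G` equal to the difference of the two forces that difference to vanish. -/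
lemma quadratic_growth (hY : IsRStarMaximizer k S Y) (hZ : Z ∈ Fantope d k)
    (hG : G.IsHermitian) :
    minner S Z - matEntropy Z +
        (minner G (Z - Y) - minner (G * G) ((1 / 6 : ℝ) • Z + (1 / 3 : ℝ) • Y)) ≤
      rStar d k S := by
  obtain ⟨X, hX, hgrowth⟩ := exists_mem_fantope_quadratic_growth S (le_of_mem_fantope hY.1)
  have hD : (Y - X).IsHermitian := hY.1.1.isHermitian.sub hX.1.isHermitian
  have hYX : Y = X := by
    have hmax : minner S X - matEntropy X ≤ minner S Y - matEntropy Y := hY.2 hX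
    have hle : minner (Y - X) (Y - X) ≤ 0 := by
      linarith [hgrowth Y hY.1 (Y - X) hD, minner_sq_le_of_mem_fantope hY.1 hX hD]
    have hzero : ((Y - X)ᴴ * (Y - X)).trace = 0 := by
      refine le_antisymm ?_ (posSemidef_conjTranspose_mul_self _).trace_nonneg
      rwa [hD.eq]
    exact sub_eq_zero.mp (trace_conjTranspose_mul_self_eq_zero_iff.mp hzero)
  subst hYX
  exact (hgrowth Z hZ G hG).trans_eq hY.rStar_eq.symm

lemma half_minner_sub_sub_le (hY : IsRStarMaximizer k S Y) (hZ : Z ∈ Fantope d k) :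
    1 / 2 * minner (Z - Y) (Z - Y) ≤ rStar d k S - (minner S Z - matEntropy Z) := by
  have hD : (Z - Y).IsHermitian := hZ.1.isHermitian.sub hY.1.1.isHermitian
  linarith [hY.quadratic_growth hZ hD, minner_sq_le_of_mem_fantope hZ hY.1 hD]

lemma rStar_add_ge (H : Matrix (Fin d) (Fin d) ℝ) (hY : IsRStarMaximizer k S Y) :
    rStar d k S + minner H Y ≤ rStar d k (S + H) := by
  obtain ⟨Z, hZ⟩ := exists_isRStarMaximizer (S + H) (le_of_mem_fantope hY.1)
  have hle : minner (S + H) Y - matEntropy Y ≤ minner (S + H) Z - matEntropy Z := hZ.2 hY.1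
  rw [← hZ.rStar_eq] at hle
  rw [hY.rStar_eq]
  simp only [minner, Matrix.add_mul, trace_add] at hle ⊢
  linarith

lemma rStar_add_le (H : Matrix (Fin d) (Fin d) ℝ) (hY : IsRStarMaximizer k S Y) :
    rStar d k (S + H) ≤ rStar d k S + minner H Y + 1 / 2 * (H * Hᵀ).trace := by
  obtain ⟨Z, hZ⟩ := exists_isRStarMaximizer (S + H) (le_of_mem_fantope hY.1)
  have hgap := hY.half_minner_sub_sub_le hZ.1
  have hDt : (Z - Y)ᵀ = Z - Y := by
    simpa using (hZ.1.1.isHermitian.sub hY.1.1.isHermitian).eq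
  have hsq : 0 ≤ ((H - (Z - Y)) * (H - (Z - Y))ᵀ).trace := by
    simpa using (posSemidef_self_mul_conjTranspose (H - (Z - Y))).trace_nonneg
  have htranspose : ((Z - Y) * Hᵀ).trace = (H * (Z - Y)).trace := by
    rw [← trace_transpose, transpose_mul, transpose_transpose, hDt]
  rw [transpose_sub, hDt, Matrix.sub_mul, Matrix.mul_sub, Matrix.mul_sub (Z - Y), trace_sub,
    trace_sub, trace_sub, htranspose, Matrix.mul_sub H, trace_sub] at hsq
  rw [hZ.rStar_eq]
  simp only [minner, Matrix.add_mul, trace_add] at hgap ⊢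
  linarith

lemma rStar_add_le_of_isHermitian {Y' : Matrix (Fin d) (Fin d) ℝ}
    (hY : IsRStarMaximizer k S Y) (hY' : IsRStarMaximizer k (S + G) Y') (hG : G.IsHermitian) :
    rStar d k (S + G) ≤
      rStar d k S + minner G Y + (1 / 6 * minner (G * G) Y' + 1 / 3 * minner (G * G) Y) := by
  have hgrowth := hY.quadratic_growth hY'.1 hG
  rw [hY'.rStar_eq]
  simp only [minner, Matrix.add_mul, Matrix.mul_sub, Matrix.mul_add, Matrix.mul_smul, trace_add,
    trace_sub, trace_smul, smul_eq_mul] at hgrowth ⊢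
  linarith

end IsRStarMaximizer

end Maximiser

section SecondOrder

variable {E : Type*} [NormedAddCommGroup E] [NormedSpace ℝ E] {f : E → ℝ} {x : E}

lemma hasFDerivAt_of_abs_sub_le_mul_sq {f' : E →L[ℝ] ℝ} {C : ℝ}
    (h : ∀ v, |f (x + v) - f x - f' v| ≤ C * ‖v‖ ^ 2) : HasFDerivAt f f' x := by
  rw [hasFDerivAt_iff_isLittleO_nhds_zero]
  refine (Asymptotics.IsBigO.of_bound C (Eventually.of_forall fun v => ?_)).trans_isLittleO
    (Asymptotics.isLittleO_norm_pow_id one_lt_two)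
  simpa using h v

variable {f' : E → E →L[ℝ] ℝ} {f'' : E →L[ℝ] E →L[ℝ] ℝ}

lemma tendsto_taylor_two_div_sq (hf : ∀ y, HasFDerivAt f (f' y) y)
    (hf' : HasFDerivAt f' f'' x) (v : E) :
    Tendsto (fun t : ℝ => (f (x + t • v) - f x - t * f' x v) / t ^ 2)
      (𝓝[>] 0) (𝓝 (f'' v v / 2)) := by
  have htaylor := Convex.taylor_approx_two_segment (v := 0) (w := v) convex_univ
    (fun y _ => hf y) (Set.mem_univ x) hf'.hasFDerivWithinAt (by simp) (by simp)
  have hlim := htaylor.tendsto_div_nhds_zero.add_const (f'' v v / 2)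
  rw [zero_add] at hlim
  refine hlim.congr' ?_
  filter_upwards [self_mem_nhdsWithin] with t (ht : 0 < t)
  simp only [smul_zero, add_zero, map_zero, _root_.zero_apply, smul_eq_mul]
  field_simp
  ring

lemma apply_apply_le_of_le_taylor (hf : ∀ y, HasFDerivAt f (f' y) y) (hf' : HasFDerivAt f' f'' x)
    {v w : E} {a b : ℝ}
    (hle : ∀ t > 0, f (x + t • v) ≤
      f x + t * f' x v + t ^ 2 * (a * f' (x + t • v) w + b * f' x w)) :
    f'' v v ≤ 2 * (a + b) * f' x w := by
  have hupper : ContinuousAt (fun t : ℝ => a * f' (x + t • v) w + b * f' x w) 0 := by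
    have hcurve : ContinuousAt (fun t : ℝ => x + t • v) 0 := by fun_prop
    have hf'curve : ContinuousAt (fun t : ℝ => f' (x + t • v)) 0 :=
      hf'.continuousAt.comp_of_eq hcurve (by simp)
    exact ((hf'curve.clm_apply continuousAt_const).const_mul a).add_const _
  have hlim := le_of_tendsto_of_tendsto (tendsto_taylor_two_div_sq hf hf' v)
    (hupper.tendsto.mono_left nhdsWithin_le_nhds) ?_
  · simp only [zero_smul, add_zero] at hlim
    linarith
  filter_upwards [self_mem_nhdsWithin] with t (ht : 0 < t)
  rw [div_le_iff₀ (by positivity)]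
  linarith [hle t ht]

end SecondOrder

section Hessian

variable {d k : ℕ} {S Y G : Matrix (Fin d) (Fin d) ℝ}

/-- The linear form `⟨·, Y⟩`, the derivative of `r*` at `S` when `Y = ∇r*(S)`. -/
noncomputable def minnerCLM (Y : Matrix (Fin d) (Fin d) ℝ) : Matrix (Fin d) (Fin d) ℝ →L[ℝ] ℝ :=
  LinearMap.toContinuousLinearMap (traceLinearMap (Fin d) ℝ ℝ ∘ₗ LinearMap.mulRight ℝ Y)

lemma minnerCLM_apply (Y H : Matrix (Fin d) (Fin d) ℝ) : minnerCLM Y H = minner H Y := rfl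

lemma trace_mul_transpose_self_le (H : Matrix (Fin d) (Fin d) ℝ) :
    (H * Hᵀ).trace ≤ d ^ 2 * ‖H‖ ^ 2 :=
  calc (H * Hᵀ).trace = ∑ i, ∑ j, ‖H i j‖ ^ 2 := by
        simp [trace, mul_apply, sq]
    _ ≤ ∑ _i : Fin d, ∑ _j : Fin d, ‖H‖ ^ 2 := by
        gcongr with i _ j _
        exact norm_entry_le_entrywise_sup_norm H
    _ = d ^ 2 * ‖H‖ ^ 2 := by simp [sq, mul_assoc]

lemma IsRStarMaximizer.hasFDerivAt (hY : IsRStarMaximizer k S Y) :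
    HasFDerivAt (rStar d k) (minnerCLM Y) S := by
  refine hasFDerivAt_of_abs_sub_le_mul_sq (C := 1 / 2 * d ^ 2) fun H => ?_
  change |rStar d k (S + H) - rStar d k S - minner H Y| ≤ _
  have hlower := hY.rStar_add_ge H
  have hupper := hY.rStar_add_le H
  have hH := trace_mul_transpose_self_le H
  rw [abs_of_nonneg (by linarith)]
  linarith

theorem hessian_rStar_quadratic_form_le_general (d k : ℕ)
    (S : Matrix (Fin d) (Fin d) ℝ) (htwice : DifferentiableAt ℝ (fderiv ℝ (rStar d k)) S)
    (Y : Matrix (Fin d) (Fin d) ℝ) (hY : IsRStarMaximizer k S Y)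
    (G : Matrix (Fin d) (Fin d) ℝ) (hG : G.IsHermitian) :
    fderiv ℝ (fderiv ℝ (rStar d k)) S G G ≤ (Y * (G * G)).trace := by
  choose grad hgrad using fun S : Matrix (Fin d) (Fin d) ℝ =>
    exists_isRStarMaximizer S (le_of_mem_fantope hY.1)
  have hfderiv {T X : Matrix (Fin d) (Fin d) ℝ} (hX : IsRStarMaximizer k T X) :
      fderiv ℝ (rStar d k) T = minnerCLM X := hX.hasFDerivAt.fderiv
  have htaylor (t : ℝ) : rStar d k (S + t • G) ≤
      rStar d k S + t * fderiv ℝ (rStar d k) S G + t ^ 2 *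
        (1 / 6 * fderiv ℝ (rStar d k) (S + t • G) (G * G) +
          1 / 3 * fderiv ℝ (rStar d k) S (G * G)) := by
    rw [hfderiv hY, hfderiv (hgrad (S + t • G))]
    refine (hY.rStar_add_le_of_isHermitian (hgrad (S + t • G))
      (hG.smul (IsSelfAdjoint.all t))).trans_eq ?_
    simp only [minnerCLM_apply, minner, smul_mul, Matrix.mul_smul, trace_smul, smul_eq_mul]
    ring
  calc fderiv ℝ (fderiv ℝ (rStar d k)) S G G
      ≤ 2 * (1 / 6 + 1 / 3) * fderiv ℝ (rStar d k) S (G * G) :=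
        apply_apply_le_of_le_taylor
          (fun T => (hgrad T).hasFDerivAt.differentiableAt.hasFDerivAt)
          htwice.hasFDerivAt fun t _ => htaylor t
    _ = (Y * (G * G)).trace := by
        rw [hfderiv hY, minnerCLM_apply, minner, trace_mul_comm]
        ring

end Hessian

/-- Hessian bound: if `r*` is twice differentiable at the symmetric matrix `S`, then for every
positive semidefinite `G`, `D²r*(S)[G, G] ≤ ⟨∇r*(S), G²⟩`. -/
theorem hessian_rStar_quadratic_form_le (d k : ℕ) (hd : 1 ≤ d) (hk1 : 1 ≤ k) (hkd : k ≤ d)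
    (S : Matrix (Fin d) (Fin d) ℝ) (hS : S.IsHermitian)
    (htwice : DifferentiableAt ℝ (fderiv ℝ (rStar d k)) S)
    (YS : Matrix (Fin d) (Fin d) ℝ) (hYS : YS ∈ Fantope d k)
    (hYSmax : ∀ Z ∈ Fantope d k,
      minner S Z - matEntropy Z ≤ minner S YS - matEntropy YS)
    (G : Matrix (Fin d) (Fin d) ℝ) (hG : G.PosSemidef) :
    fderiv ℝ (fderiv ℝ (rStar d k)) S G G ≤ (YS * (G * G)).trace :=
  hessian_rStar_quadratic_form_le_general d k S htwice YS ⟨hYS, hYSmax⟩ G hG.isHermitian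
end
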